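/- arXiv:2503.10251 — 2 statements merged into one kernel-verified Lean document; each statement's English description precedes it below -/
import Mathlib

section
/- Let x ∈ ℝ^d be nonzero and let f : ℝ^d → ℝ^D be twice continuously Fréchet differentiable in an open neighbourhood of x, with f(x) having all entries nonzero. Then there exists β* > 0 such that for every fixed 0 ≤ β < β* and every x̂ ∈ ℝ^d with ρ_c(x̂, x) ≤ β, and for any floating-point evaluation scheme for f: ρ_c( fl(f(x̂)), f(x) ) ≤ ρ_c( fl(f(x̂)), f(x̂) ) + κ_{c,c}(f, x) · ρ_c(x̂, x) + C·(u² + ρ_c(x̂, x)²), where the hidden constant C depends on x, β and f but not on x̂ or u, under the convention that the asymptotic remainder is interpreted with fl(f(x̂)) having componentwise relative error O(u) relative to f(x̂) (the inequality holds trivially if this error is infinite). -/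
open scoped BigOperators ENNReal

noncomputable section

namespace TR

/-! ### Norms and basic quantities -/

/-- Euclidean (ℓ₂) norm of a vector. -/
def l2 {d : ℕ} (x : Fin d → ℝ) : ℝ := Real.sqrt (∑ i, x i ^ 2)

/-- ℓ_∞ norm of a vector. -/
def linf {d : ℕ} (x : Fin d → ℝ) : ℝ := ⨆ i, |x i|

/-- "ℓ_{−∞}" functional: the minimal absolute value of the entries. -/
def lminf {d : ℕ} (x : Fin d → ℝ) : ℝ := ⨅ i, |x i|

/-- ℓ₁ norm of a vector. -/
def l1 {d : ℕ} (x : Fin d → ℝ) : ℝ := ∑ i, |x i|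

/-- γ_k = k u / (1 − k u). -/
def gam (k : ℕ) (u : ℝ) : ℝ := (k : ℝ) * u / (1 - (k : ℝ) * u)

/-- entrywise absolute value of a matrix. -/
def matAbs {a b : ℕ} (B : Matrix (Fin a) (Fin b) ℝ) : Matrix (Fin a) (Fin b) ℝ :=
  Matrix.of fun i j => |B i j|

/-- largest singular value: supremum of ‖Bx‖₂ over ℓ₂-unit vectors. -/
def sigmaMax {d : ℕ} (B : Matrix (Fin d) (Fin d) ℝ) : ℝ :=
  ⨆ x : {x : Fin d → ℝ // l2 x = 1}, l2 (fun i => ∑ j, B i j * x.1 j)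

/-- smallest singular value: infimum of ‖Bx‖₂ over ℓ₂-unit vectors. -/
def sigmaMin {d : ℕ} (B : Matrix (Fin d) (Fin d) ℝ) : ℝ :=
  ⨅ x : {x : Fin d → ℝ // l2 x = 1}, l2 (fun i => ∑ j, B i j * x.1 j)

/-- matrix (1,∞) operator norm: max of absolute values of entries. -/
def norm1inf {a b : ℕ} (B : Matrix (Fin a) (Fin b) ℝ) : ℝ := ⨆ p : Fin a × Fin b, |B p.1 p.2|

/-- matrix (∞,∞) operator norm: max row ℓ₁ norm. -/
def norminfinf {a b : ℕ} (B : Matrix (Fin a) (Fin b) ℝ) : ℝ := ⨆ i, ∑ j, |B i j|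

/-- matrix (1,1) operator norm: max column ℓ₁ norm. -/
def norm11 {a b : ℕ} (B : Matrix (Fin a) (Fin b) ℝ) : ℝ := ⨆ j, ∑ i, |B i j|

/-! ### Componentwise relative distance -/

/-- Componentwise relative distance between vectors, with the conventions
`t/0 = ∞` for `t ≠ 0` and `0/0 = 0`. -/
def rhoV {d : ℕ} (xh x : Fin d → ℝ) : ℝ≥0∞ :=
  ⨆ i, (if x i = 0 then (if xh i = 0 then (0 : ℝ≥0∞) else ⊤)
        else ENNReal.ofReal (|xh i - x i| / |x i|))

/-- Componentwise relative distance between matrices given by their columns. -/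
def rhoM {d n : ℕ} (Xh X : Fin n → Fin d → ℝ) : ℝ≥0∞ := ⨆ t, rhoV (Xh t) (X t)

/-! ### Exact transformer components -/

/-- RMS layer normalization `R(x) = √d · x / ‖x‖₂`. -/
def rmsN {d : ℕ} (x : Fin d → ℝ) : Fin d → ℝ := fun i => Real.sqrt d * x i / l2 x

/-- sample mean. -/
def meanv {d : ℕ} (x : Fin d → ℝ) : ℝ := (∑ i, x i) / d

/-- centring `c̊(x) = x − μ(x) e`. -/
def centr {d : ℕ} (x : Fin d → ℝ) : Fin d → ℝ := fun i => x i - meanv x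

/-- layer normalization `N(x) = √d · c̊(x)/‖c̊(x)‖₂ = (x − μ(x)e)/√ν(x)`. -/
def layerN {d : ℕ} (x : Fin d → ℝ) : Fin d → ℝ := rmsN (centr x)

/-- softmax. -/
def softmax {m : ℕ} (s : Fin m → ℝ) : Fin m → ℝ :=
  fun i => Real.exp (s i) / ∑ j, Real.exp (s j)

/-- affine map `x ↦ A x + b`. -/
def affine {k m : ℕ} (A : Matrix (Fin k) (Fin m) ℝ) (b : Fin k → ℝ) (x : Fin m → ℝ) :
    Fin k → ℝ :=
  fun i => (∑ j, A i j * x j) + b i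

/-- two-layer perceptron `M = L₂ ∘ ReLU ∘ L₁`. -/
def tlp {d D : ℕ} (A1 : Matrix (Fin D) (Fin d) ℝ) (b1 : Fin D → ℝ)
    (A2 : Matrix (Fin d) (Fin D) ℝ) (b2 : Fin d → ℝ) (x : Fin d → ℝ) : Fin d → ℝ :=
  affine A2 b2 (fun i => max 0 (affine A1 b1 x i))

/-- the matrix of the first `t+1` columns of `X` (columns are `X 0, …, X t`). -/
def prefixCols {d n : ℕ} (X : Fin n → Fin d → ℝ) (t : Fin n) : Fin (t.1 + 1) → Fin d → ℝ :=
  fun i => X (Fin.castLE t.isLt i)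

/-- similarity scores `S(Z) = (1/√d) (W_k Z)ᵀ (W_q z_last)`. -/
def simScores {d m : ℕ} (Wq Wk : Matrix (Fin d) (Fin d) ℝ)
    (Z : Fin (m + 1) → Fin d → ℝ) : Fin (m + 1) → ℝ :=
  fun i => (1 / Real.sqrt d) * ∑ a, (∑ b, Wk a b * Z i b) * (∑ b, Wq a b * Z (Fin.last m) b)

/-- masked single-head self-attention: the `t`-th column of `A(X)` is
`W_v X_t ψ(S(X_t))`. -/
def attn {d n : ℕ} (Wq Wk Wv : Matrix (Fin d) (Fin d) ℝ) (X : Fin n → Fin d → ℝ) :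
    Fin n → Fin d → ℝ :=
  fun t i => ∑ a, Wv i a * ∑ j : Fin (t.1 + 1),
    softmax (simScores Wq Wk (prefixCols X t)) j * prefixCols X t j a

/-- transformer configuration. -/
structure Config (d D : ℕ) where
  A1 : Matrix (Fin D) (Fin d) ℝ
  b1 : Fin D → ℝ
  A2 : Matrix (Fin d) (Fin D) ℝ
  b2 : Fin d → ℝ
  Wq : Matrix (Fin d) (Fin d) ℝ
  Wk : Matrix (Fin d) (Fin d) ℝ
  Wv : Matrix (Fin d) (Fin d) ℝ

/-- transformer block with RMS layer normalization
`Q_Θ = (Id + M* ∘ R*) ∘ (Id + A ∘ R*)`. -/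
def Qblock {d D n : ℕ} (c : Config d D) (X : Fin n → Fin d → ℝ) : Fin n → Fin d → ℝ :=
  let Y : Fin n → Fin d → ℝ :=
    fun t i => X t i + attn c.Wq c.Wk c.Wv (fun s => rmsN (X s)) t i
  fun t i => Y t i + tlp c.A1 c.b1 c.A2 c.b2 (rmsN (Y t)) i

/-- transformer block with layer normalization
`T_Θ = (Id + M* ∘ N*) ∘ (Id + A ∘ N*)`. -/
def Tblock {d D n : ℕ} (c : Config d D) (X : Fin n → Fin d → ℝ) : Fin n → Fin d → ℝ :=
  let Y : Fin n → Fin d → ℝ :=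
    fun t i => X t i + attn c.Wq c.Wk c.Wv (fun s => layerN (X s)) t i
  fun t i => Y t i + tlp c.A1 c.b1 c.A2 c.b2 (layerN (Y t)) i

/-! ### Floating-point model -/

/-- `a` is the rounded value of `b`: `a = b (1+δ)`, `|δ| ≤ u`. -/
def Fp (u a b : ℝ) : Prop := ∃ δ : ℝ, |δ| ≤ u ∧ a = b * (1 + δ)

/-- recursive summation of a list in floating-point arithmetic. -/
inductive FlSumL (u : ℝ) : List ℝ → ℝ → Prop
  | nil : FlSumL u [] 0
  | single (x : ℝ) : FlSumL u [x] x
  | cons (x y : ℝ) (l : List ℝ) (s r : ℝ) :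
      FlSumL u (y :: l) s → Fp u r (x + s) → FlSumL u (x :: y :: l) r

/-- recursive summation of the values of a finite family. -/
def FlSum (u : ℝ) {m : ℕ} (f : Fin m → ℝ) (r : ℝ) : Prop := FlSumL u (List.ofFn f) r

/-- floating-point inner product: rounded products, recursive summation. -/
def FlDot (u : ℝ) {m : ℕ} (x y : Fin m → ℝ) (r : ℝ) : Prop :=
  ∃ p : Fin m → ℝ, (∀ i, Fp u (p i) (x i * y i)) ∧ FlSum u p r

/-- floating-point matrix-vector product. -/
def FlMulVec (u : ℝ) {k m : ℕ} (A : Matrix (Fin k) (Fin m) ℝ) (x : Fin m → ℝ)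
    (r : Fin k → ℝ) : Prop :=
  ∀ i, FlDot u (A i) x (r i)

/-- floating-point evaluation of `x ↦ Ax + b`. -/
def FlAffine (u : ℝ) {k m : ℕ} (A : Matrix (Fin k) (Fin m) ℝ) (b : Fin k → ℝ)
    (x : Fin m → ℝ) (r : Fin k → ℝ) : Prop :=
  ∃ w : Fin k → ℝ, FlMulVec u A x w ∧ ∀ i, Fp u (r i) (w i + b i)

/-- floating-point evaluation of the two-layer perceptron (ReLU is exact). -/
def FlTLP (u : ℝ) {d D : ℕ} (A1 : Matrix (Fin D) (Fin d) ℝ) (b1 : Fin D → ℝ)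
    (A2 : Matrix (Fin d) (Fin D) ℝ) (b2 : Fin d → ℝ) (x : Fin d → ℝ) (r : Fin d → ℝ) : Prop :=
  ∃ w : Fin D → ℝ, FlAffine u A1 b1 x w ∧ FlAffine u A2 b2 (fun i => max 0 (w i)) r

/-- floating-point evaluation of the Euclidean norm: squares, recursive
summation, square root. -/
def FlL2 (u : ℝ) {m : ℕ} (x : Fin m → ℝ) (r : ℝ) : Prop :=
  ∃ sq : Fin m → ℝ, (∀ i, Fp u (sq i) (x i * x i)) ∧
    ∃ s : ℝ, FlSum u sq s ∧ Fp u r (Real.sqrt s)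

/-- floating-point evaluation of the RMS layer normalization. -/
def FlRMS (u : ℝ) {d : ℕ} (x : Fin d → ℝ) (r : Fin d → ℝ) : Prop :=
  ∃ nrm : ℝ, FlL2 u x nrm ∧
    ∀ i, ∃ t : ℝ, Fp u t (Real.sqrt d * x i) ∧ Fp u (r i) (t / nrm)

/-- floating-point evaluation of the centring. -/
def FlCentr (u : ℝ) {d : ℕ} (x : Fin d → ℝ) (r : Fin d → ℝ) : Prop :=
  ∃ s m : ℝ, FlSum u x s ∧ Fp u m (s / (d : ℝ)) ∧ ∀ i, Fp u (r i) (x i - m)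

/-- floating-point evaluation of the layer normalization: centring followed by
RMS normalization of the centred vector. -/
def FlLN (u : ℝ) {d : ℕ} (x : Fin d → ℝ) (r : Fin d → ℝ) : Prop :=
  ∃ c : Fin d → ℝ, FlCentr u x c ∧ FlRMS u c r

/-- floating-point evaluation of the softmax. -/
def FlSoftmax (u : ℝ) {m : ℕ} (s : Fin m → ℝ) (r : Fin m → ℝ) : Prop :=
  ∃ ex : Fin m → ℝ, (∀ i, Fp u (ex i) (Real.exp (s i))) ∧
    ∃ tot : ℝ, FlSum u ex tot ∧ ∀ i, Fp u (r i) (ex i / tot)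

/-- floating-point evaluation of the similarity scores. -/
def FlSim (u : ℝ) {d m : ℕ} (Wq Wk : Matrix (Fin d) (Fin d) ℝ)
    (Z : Fin (m + 1) → Fin d → ℝ) (r : Fin (m + 1) → ℝ) : Prop :=
  ∃ q : Fin d → ℝ, FlMulVec u Wq (Z (Fin.last m)) q ∧
    ∀ i, ∃ kv : Fin d → ℝ, ∃ dp : ℝ, FlMulVec u Wk (Z i) kv ∧ FlDot u q kv dp ∧
      Fp u (r i) (dp / Real.sqrt d)

/-- floating-point evaluation of the self-attention. -/
def FlAttn (u : ℝ) {d n : ℕ} (Wq Wk Wv : Matrix (Fin d) (Fin d) ℝ)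
    (X : Fin n → Fin d → ℝ) (r : Fin n → Fin d → ℝ) : Prop :=
  ∀ t : Fin n, ∃ s psi : Fin (t.1 + 1) → ℝ, ∃ z : Fin d → ℝ,
    FlSim u Wq Wk (prefixCols X t) s ∧ FlSoftmax u s psi ∧
    (∀ a : Fin d, FlDot u (fun j => prefixCols X t j a) psi (z a)) ∧
    FlMulVec u Wv z (r t)

/-- floating-point evaluation of `X ↦ X + A(R*(X))`. -/
def FlResAttnRMS (u : ℝ) {d n : ℕ} (Wq Wk Wv : Matrix (Fin d) (Fin d) ℝ)
    (X r : Fin n → Fin d → ℝ) : Prop :=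
  ∃ RX G : Fin n → Fin d → ℝ, (∀ t, FlRMS u (X t) (RX t)) ∧ FlAttn u Wq Wk Wv RX G ∧
    ∀ t i, Fp u (r t i) (X t i + G t i)

/-- floating-point evaluation of `X ↦ X + A(N*(X))`. -/
def FlResAttnLN (u : ℝ) {d n : ℕ} (Wq Wk Wv : Matrix (Fin d) (Fin d) ℝ)
    (X r : Fin n → Fin d → ℝ) : Prop :=
  ∃ NX G : Fin n → Fin d → ℝ, (∀ t, FlLN u (X t) (NX t)) ∧ FlAttn u Wq Wk Wv NX G ∧
    ∀ t i, Fp u (r t i) (X t i + G t i)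

/-- floating-point evaluation of `x ↦ x + M(R(x))`. -/
def FlResTlpRMS (u : ℝ) {d D : ℕ} (A1 : Matrix (Fin D) (Fin d) ℝ) (b1 : Fin D → ℝ)
    (A2 : Matrix (Fin d) (Fin D) ℝ) (b2 : Fin d → ℝ) (x r : Fin d → ℝ) : Prop :=
  ∃ rx m : Fin d → ℝ, FlRMS u x rx ∧ FlTLP u A1 b1 A2 b2 rx m ∧
    ∀ i, Fp u (r i) (x i + m i)

/-- floating-point evaluation of `x ↦ x + M(N(x))`. -/
def FlResTlpLN (u : ℝ) {d D : ℕ} (A1 : Matrix (Fin D) (Fin d) ℝ) (b1 : Fin D → ℝ)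
    (A2 : Matrix (Fin d) (Fin D) ℝ) (b2 : Fin d → ℝ) (x r : Fin d → ℝ) : Prop :=
  ∃ nx m : Fin d → ℝ, FlLN u x nx ∧ FlTLP u A1 b1 A2 b2 nx m ∧
    ∀ i, Fp u (r i) (x i + m i)

/-- floating-point evaluation of the transformer block with RMS normalization. -/
def FlQBlock (u : ℝ) {d D n : ℕ} (c : Config d D) (X R : Fin n → Fin d → ℝ) : Prop :=
  ∃ RX G Y RY M : Fin n → Fin d → ℝ,
    (∀ t, FlRMS u (X t) (RX t)) ∧
    FlAttn u c.Wq c.Wk c.Wv RX G ∧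
    (∀ t i, Fp u (Y t i) (X t i + G t i)) ∧
    (∀ t, FlRMS u (Y t) (RY t)) ∧
    (∀ t, FlTLP u c.A1 c.b1 c.A2 c.b2 (RY t) (M t)) ∧
    (∀ t i, Fp u (R t i) (Y t i + M t i))

/-- floating-point evaluation of the transformer block with layer
normalization. -/
def FlTBlock (u : ℝ) {d D n : ℕ} (c : Config d D) (X R : Fin n → Fin d → ℝ) : Prop :=
  ∃ NX G Y NY M : Fin n → Fin d → ℝ,
    (∀ t, FlLN u (X t) (NX t)) ∧
    FlAttn u c.Wq c.Wk c.Wv NX G ∧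
    (∀ t i, Fp u (Y t i) (X t i + G t i)) ∧
    (∀ t, FlLN u (Y t) (NY t)) ∧
    (∀ t, FlTLP u c.A1 c.b1 c.A2 c.b2 (NY t) (M t)) ∧
    (∀ t i, Fp u (R t i) (Y t i + M t i))

/-- floating-point evaluation of a deep transformer with RMS normalization. -/
def FlQDeep (u : ℝ) {d D n L : ℕ} (cfg : Fin L → Config d D)
    (X R : Fin n → Fin d → ℝ) : Prop :=
  ∃ Z : Fin (L + 1) → Fin n → Fin d → ℝ, Z 0 = X ∧ Z (Fin.last L) = R ∧
    ∀ l : Fin L, FlQBlock u (cfg l) (Z l.castSucc) (Z l.succ)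

/-- floating-point evaluation of a deep transformer with layer normalization. -/
def FlTDeep (u : ℝ) {d D n L : ℕ} (cfg : Fin L → Config d D)
    (X R : Fin n → Fin d → ℝ) : Prop :=
  ∃ Z : Fin (L + 1) → Fin n → Fin d → ℝ, Z 0 = X ∧ Z (Fin.last L) = R ∧
    ∀ l : Fin L, FlTBlock u (cfg l) (Z l.castSucc) (Z l.succ)

/-! ### Condition numbers and amplification factors -/

/-- componentwise condition number of a vector-valued map. -/
def kccV {d k : ℕ} (f : (Fin d → ℝ) → (Fin k → ℝ)) (x : Fin d → ℝ) : ℝ :=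
  ⨆ i, (∑ j, |fderiv ℝ f x (Pi.single j 1) i * x j|) / |f x i|

/-- componentwise condition number of a matrix-valued map (matrices given by
their columns). -/
def kccM {d n : ℕ} (f : (Fin n → Fin d → ℝ) → (Fin n → Fin d → ℝ))
    (X : Fin n → Fin d → ℝ) : ℝ :=
  ⨆ p : Fin n × Fin d, (∑ q : Fin n × Fin d,
      |fderiv ℝ f X (Pi.single q.1 (Pi.single q.2 1)) p.1 p.2 * X q.1 q.2|) / |f X p.1 p.2|

/-- cancellation factor of a residual connection, vector version. -/
def xiResV {d : ℕ} (x g : Fin d → ℝ) : ℝ := ⨆ i, (|x i| + |g i|) / |x i + g i|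

/-- cancellation factor of a residual connection, matrix version. -/
def xiRes {d n : ℕ} (X G : Fin n → Fin d → ℝ) : ℝ :=
  ⨆ p : Fin n × Fin d, (|X p.1 p.2| + |G p.1 p.2|) / |X p.1 p.2 + G p.1 p.2|

/-- positive support `Ω = supp₊(L₁(z))`. -/
def posSupp {d D : ℕ} (A1 : Matrix (Fin D) (Fin d) ℝ) (b1 : Fin D → ℝ)
    (z : Fin d → ℝ) : Finset (Fin D) :=
  Finset.univ.filter fun k => 0 < affine A1 b1 z k

/-- amplification factor ξ(M, z) of the two-layer perceptron. -/
def xiM {d D : ℕ} (A1 : Matrix (Fin D) (Fin d) ℝ) (b1 : Fin D → ℝ)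
    (A2 : Matrix (Fin d) (Fin D) ℝ) (b2 : Fin d → ℝ) (z : Fin d → ℝ) : ℝ :=
  ⨆ i : Fin d, ((∑ k ∈ posSupp A1 b1 z, |A2 i k| * ((∑ j, |A1 k j| * |z j|) + |b1 k|)) + |b2 i|) /
    |tlp A1 b1 A2 b2 z i|

/-- amplification factor ξ(S, Z) of the similarity scores. -/
def xiSim {d m : ℕ} (Wq Wk : Matrix (Fin d) (Fin d) ℝ)
    (Z : Fin (m + 1) → Fin d → ℝ) : ℝ :=
  ⨆ i, ((1 / Real.sqrt d) *
      ∑ a, (∑ b, |Wk a b| * |Z i b|) * (∑ b, |Wq a b| * |Z (Fin.last m) b|)) /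
    |simScores Wq Wk Z i|

/-- amplification factor ξ(A, Z) of the self-attention. -/
def xiAttn {d n : ℕ} (Wq Wk Wv : Matrix (Fin d) (Fin d) ℝ) (Z : Fin n → Fin d → ℝ) : ℝ :=
  ⨆ p : Fin d × Fin n,
    (∑ j : Fin (p.2.1 + 1), (∑ a, |Wv p.1 a| * |prefixCols Z p.2 j a|) *
        softmax (simScores Wq Wk (prefixCols Z p.2)) j) /
    |∑ j : Fin (p.2.1 + 1), (∑ a, Wv p.1 a * prefixCols Z p.2 j a) *
        softmax (simScores Wq Wk (prefixCols Z p.2)) j|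


lemma rhoV_coord {d : ℕ} (xh x : Fin d → ℝ) (h : rhoV xh x ≠ ⊤) (i : Fin d) :
    |xh i - x i| ≤ (rhoV xh x).toReal * |x i| := by
  have h1 : (if x i = 0 then (if xh i = 0 then (0 : ℝ≥0∞) else ⊤)
        else ENNReal.ofReal (|xh i - x i| / |x i|)) ≤ rhoV xh x :=
    le_iSup (fun i => (if x i = 0 then (if xh i = 0 then (0 : ℝ≥0∞) else ⊤)
        else ENNReal.ofReal (|xh i - x i| / |x i|))) i
  by_cases hx : x i = 0
  · by_cases hy : xh i = 0
    · simp [hx, hy]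
    · simp only [hx, hy, if_true, if_false, top_le_iff] at h1
      exact absurd h1 h
  · rw [if_neg hx] at h1
    have h2 := (ENNReal.ofReal_le_iff_le_toReal h).1 h1
    rwa [div_le_iff₀ (abs_pos.2 hx)] at h2

lemma rhoV_le {d : ℕ} (y x : Fin d → ℝ) (c : ℝ) (hx : ∀ i, x i ≠ 0)
    (h : ∀ i, |y i - x i| ≤ c * |x i|) : rhoV y x ≤ ENNReal.ofReal c := by
  refine iSup_le fun i => ?_
  rw [if_neg (hx i)]
  apply ENNReal.ofReal_le_ofReal
  rw [div_le_iff₀ (abs_pos.2 (hx i))]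
  exact h i

lemma kccV_nonneg {d k : ℕ} (f : (Fin d → ℝ) → (Fin k → ℝ)) (x : Fin d → ℝ) :
    0 ≤ kccV f x :=
  Real.iSup_nonneg fun _ => by positivity

lemma kccV_bound {d k : ℕ} (f : (Fin d → ℝ) → (Fin k → ℝ)) (x h : Fin d → ℝ)
    (hfx : ∀ i, f x i ≠ 0) (t : ℝ) (hh : ∀ j, |h j| ≤ t * |x j|) (i : Fin k) :
    |fderiv ℝ f x h i| ≤ kccV f x * t * |f x i| := by
  have hsum : fderiv ℝ f x h i = ∑ j, h j * fderiv ℝ f x (Pi.single j 1) i := by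
    conv_lhs => rw [pi_eq_sum_univ' h]
    simp [Finset.sum_apply]
  by_cases hd : IsEmpty (Fin d)
  · rw [hsum]; simp [kccV]
  rw [not_isEmpty_iff] at hd
  have hk : (∑ j, |fderiv ℝ f x (Pi.single j 1) i * x j|) / |f x i| ≤ kccV f x :=
    le_ciSup (f := fun i => (∑ j, |fderiv ℝ f x (Pi.single j 1) i * x j|) / |f x i|)
      (Set.finite_range _).bddAbove i
  rw [div_le_iff₀ (abs_pos.2 (hfx i))] at hk
  by_cases ht : 0 ≤ t
  · calc |fderiv ℝ f x h i| ≤ ∑ j, |h j * fderiv ℝ f x (Pi.single j 1) i| := by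
          rw [hsum]; exact Finset.abs_sum_le_sum_abs _ _
      _ ≤ ∑ j, t * |fderiv ℝ f x (Pi.single j 1) i * x j| := by
          refine Finset.sum_le_sum fun j _ => ?_
          rw [abs_mul, abs_mul]
          nlinarith [mul_le_mul_of_nonneg_right (hh j)
            (abs_nonneg (fderiv ℝ f x (Pi.single j 1) i))]
      _ = t * ∑ j, |fderiv ℝ f x (Pi.single j 1) i * x j| := by rw [Finset.mul_sum]
      _ ≤ t * (kccV f x * |f x i|) := mul_le_mul_of_nonneg_left hk ht
      _ = _ := by ring
  · push Not at ht
    have hx0 : ∀ j, x j = 0 := fun j => by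
      by_contra hne
      nlinarith [hh j, abs_nonneg (h j), abs_pos.2 hne]
    have hh0 : ∀ j, h j = 0 := fun j => by
      have := hh j
      rw [hx0 j] at this
      simpa using this
    have : kccV f x = 0 := by simp [kccV, hx0]
    rw [hsum, this]
    simp [hh0]

lemma taylor_two {d D : ℕ} (x : Fin d → ℝ) (f : (Fin d → ℝ) → (Fin D → ℝ))
    (hf : ContDiffAt ℝ 2 f x) :
    ∃ r > 0, ∃ L : ℝ, 0 ≤ L ∧ ∀ z, ‖z - x‖ < r →
      ‖f z - f x - fderiv ℝ f x (z - x)‖ ≤ L * ‖z - x‖ ^ 2 := by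
  have h1 : ContDiffAt ℝ 1 (fderiv ℝ f) x := hf.fderiv_right (by norm_num)
  obtain ⟨L, t, ht, hL⟩ := h1.exists_lipschitzOnWith
  have hd : ∀ᶠ z in nhds x, DifferentiableAt ℝ f z := by
    filter_upwards [hf.eventually (by simp)] with z hz
    exact hz.differentiableAt (by norm_num)
  obtain ⟨r, hr, hball⟩ := Metric.mem_nhds_iff.1 (Filter.inter_mem ht hd)
  refine ⟨r, hr, L, L.2, fun z hz => ?_⟩
  have hsub : Metric.closedBall x ‖z - x‖ ⊆ Metric.ball x r :=
    Metric.closedBall_subset_ball hz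
  have := (convex_closedBall x ‖z - x‖).norm_image_sub_le_of_norm_fderiv_le' (𝕜 := ℝ) (f := f)
    (φ := fderiv ℝ f x) (C := L * ‖z - x‖) (x := x) (y := z)
    (fun w hw => (hball (hsub hw)).2)
    (fun w hw => by
      have h2 := hL.norm_sub_le (hball (hsub hw)).1 (mem_of_mem_nhds ht)
      refine h2.trans (mul_le_mul_of_nonneg_left ?_ L.2)
      rwa [mem_closedBall_iff_norm] at hw)
    (Metric.mem_closedBall_self (norm_nonneg _)) (mem_closedBall_iff_norm.2 le_rfl)
  calc _ ≤ _ := this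
    _ = _ := by ring

/-- local sensitivity bound: rounding error at a perturbed argument of a twice
continuously differentiable map in terms of its componentwise condition number.
`y` stands for the computed value `fl(f(x̂))`, assumed to carry a componentwise
relative error `≤ K u` with respect to `f(x̂)`. -/
theorem general_perturbed_bound {d D : ℕ} (x : Fin d → ℝ) (hx : x ≠ 0)
    (f : (Fin d → ℝ) → (Fin D → ℝ))
    (s : Set (Fin d → ℝ)) (hs : IsOpen s) (hxs : x ∈ s)
    (hf : ContDiffOn ℝ 2 f s)
    (hfx : ∀ i, f x i ≠ 0) :
    ∃ βs : ℝ, 0 < βs ∧ ∀ β : ℝ, 0 ≤ β → β < βs → ∀ K : ℝ, 0 ≤ K →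
      ∃ C : ℝ, ∀ u : ℝ, 0 < u →
        ∀ xh : Fin d → ℝ, rhoV xh x ≤ ENNReal.ofReal β →
        ∀ y : Fin D → ℝ, rhoV y (f xh) ≤ ENNReal.ofReal (K * u) →
          rhoV y (f x) ≤ rhoV y (f xh) + ENNReal.ofReal
            (kccV f x * (rhoV xh x).toReal
              + C * (u ^ 2 + (rhoV xh x).toReal ^ 2)) := by
  obtain ⟨r, hr, L, hL, hT⟩ := taylor_two x f (hf.contDiffAt (hs.mem_nhds hxs))
  have hxn : 0 < ‖x‖ := norm_pos_iff.2 hx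
  refine ⟨r / ‖x‖, by positivity, fun β hβ hβs K hK => ?_⟩
  obtain ⟨N, hN0, hN⟩ : ∃ N : ℝ, 0 ≤ N ∧ ∀ i, 1 ≤ N * |f x i| := by
    refine ⟨∑ i, |f x i|⁻¹, by positivity, fun i => ?_⟩
    have h1 : |f x i|⁻¹ ≤ ∑ i, |f x i|⁻¹ :=
      Finset.single_le_sum (f := fun i => |f x i|⁻¹) (fun _ _ => by positivity)
        (Finset.mem_univ i)
    have h2 := abs_pos.2 (hfx i)
    calc (1 : ℝ) = |f x i|⁻¹ * |f x i| := by field_simp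
      _ ≤ _ := mul_le_mul_of_nonneg_right h1 h2.le
  have hκ := kccV_nonneg f x
  obtain ⟨κ, hκe⟩ : ∃ κ, kccV f x = κ := ⟨_, rfl⟩
  obtain ⟨C1, hC1⟩ : ∃ C1, N * L * ‖x‖ ^ 2 = C1 := ⟨_, rfl⟩
  have hC10 : 0 ≤ C1 := by rw [← hC1]; positivity
  refine ⟨C1 + K * (κ + C1 * β), fun u hu xh hxh y hy => ?_⟩
  have htop : rhoV xh x ≠ ⊤ := ne_top_of_le_ne_top ENNReal.ofReal_ne_top hxh
  have hetop : rhoV y (f xh) ≠ ⊤ := ne_top_of_le_ne_top ENNReal.ofReal_ne_top hy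
  have hcx := rhoV_coord xh x htop
  have hcy := rhoV_coord y (f xh) hetop
  have htβ : (rhoV xh x).toReal ≤ β := ENNReal.toReal_le_of_le_ofReal hβ hxh
  have heK : (rhoV y (f xh)).toReal ≤ K * u :=
    ENNReal.toReal_le_of_le_ofReal (by positivity) hy
  rw [← ENNReal.ofReal_toReal hetop]
  have ht0 : 0 ≤ (rhoV xh x).toReal := ENNReal.toReal_nonneg
  have he0 : 0 ≤ (rhoV y (f xh)).toReal := ENNReal.toReal_nonneg
  generalize (rhoV xh x).toReal = t at *
  generalize (rhoV y (f xh)).toReal = e at *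
  rw [hκe] at hκ ⊢
  rw [← ENNReal.ofReal_add he0 (by positivity)]
  have hnorm : ‖xh - x‖ ≤ t * ‖x‖ := by
    rw [pi_norm_le_iff_of_nonneg (by positivity)]
    intro i
    rw [Pi.sub_apply, Real.norm_eq_abs]
    exact (hcx i).trans (mul_le_mul_of_nonneg_left (norm_le_pi_norm x i) ht0)
  have hlt : ‖xh - x‖ < r := by
    refine hnorm.trans_lt ?_
    rw [← lt_div_iff₀ hxn]
    exact htβ.trans_lt hβs
  have hη : ∀ i, |f xh i - f x i| ≤ (κ * t + C1 * t ^ 2) * |f x i| := by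
    intro i
    have h1 := (norm_le_pi_norm (f xh - f x - fderiv ℝ f x (xh - x)) i).trans (hT xh hlt)
    rw [Real.norm_eq_abs, Pi.sub_apply, Pi.sub_apply] at h1
    have h2 := kccV_bound f x (xh - x) hfx t hcx i
    rw [hκe] at h2
    have h3 : L * ‖xh - x‖ ^ 2 ≤ C1 * t ^ 2 * |f x i| := by
      calc L * ‖xh - x‖ ^ 2 ≤ L * (t * ‖x‖) ^ 2 := by gcongr
        _ = L * (t * ‖x‖) ^ 2 * 1 := by ring
        _ ≤ L * (t * ‖x‖) ^ 2 * (N * |f x i|) :=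
          mul_le_mul_of_nonneg_left (hN i) (by positivity)
        _ = _ := by rw [← hC1]; ring
    have h4 : |f xh i - f x i| ≤
        |f xh i - f x i - fderiv ℝ f x (xh - x) i| + |fderiv ℝ f x (xh - x) i| := by
      have := abs_add_le (f xh i - f x i - fderiv ℝ f x (xh - x) i) (fderiv ℝ f x (xh - x) i)
      simpa using this
    linarith
  have hfin : e * (1 + (κ * t + C1 * t ^ 2)) + (κ * t + C1 * t ^ 2) ≤
      e + (κ * t + (C1 + K * (κ + C1 * β)) * (u ^ 2 + t ^ 2)) := by
    have h1 : e * (κ * t + C1 * t ^ 2) ≤ K * (κ + C1 * β) * (u ^ 2 + t ^ 2) := by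
      calc e * (κ * t + C1 * t ^ 2) ≤ (K * u) * (κ * t + C1 * t ^ 2) := by gcongr
        _ = K * (κ + C1 * t) * (u * t) := by ring
        _ ≤ K * (κ + C1 * β) * (u * t) := by gcongr
        _ ≤ K * (κ + C1 * β) * (u ^ 2 + t ^ 2) := by
          refine mul_le_mul_of_nonneg_left ?_ (by positivity)
          nlinarith [sq_nonneg (u - t), sq_nonneg u, sq_nonneg t]
    nlinarith [mul_nonneg hC10 (sq_nonneg u)]
  refine rhoV_le _ _ _ hfx fun i => ?_
  have hb := abs_nonneg (f x i)
  have ha : |f xh i| ≤ (1 + (κ * t + C1 * t ^ 2)) * |f x i| := by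
    have := abs_add_le (f xh i - f x i) (f x i)
    rw [sub_add_cancel] at this
    linarith [hη i]
  calc |y i - f x i| ≤ |y i - f xh i| + |f xh i - f x i| := abs_sub_le _ _ _
    _ ≤ e * ((1 + (κ * t + C1 * t ^ 2)) * |f x i|) + (κ * t + C1 * t ^ 2) * |f x i| :=
      add_le_add ((hcy i).trans (mul_le_mul_of_nonneg_left ha he0)) (hη i)
    _ = (e * (1 + (κ * t + C1 * t ^ 2)) + (κ * t + C1 * t ^ 2)) * |f x i| := by ring
    _ ≤ _ := mul_le_mul_of_nonneg_right hfin hb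

end TR
end
end

section
/- Let ψ : ℝ^n → ℝ^n be the softmax. For every s ∈ ℝ^n: (1) ψ is Fréchet differentiable with Jacobian J_ψ(s) = diag(ψ(s)) − ψ(s)ψ(s)ᵀ, which is symmetric positive semidefinite with simple eigenvalue 0 whose eigenvector is the all-ones vector; (2) ‖J_ψ(s)‖_{2,2} ≤ ‖ψ(s)‖_∞, ‖J_ψ(s)‖_{1,∞} = max_{1≤i≤n} ψ(s)_i(1 − ψ(s)_i), and ‖J_ψ(s)‖_{1,1} = ‖J_ψ(s)‖_{∞,∞} = 2 max_{1≤i≤n} ψ(s)_i(1 − ψ(s)_i); and (3) for s ≠ 0 the mixed and componentwise condition numbers equal κ_{c,∞}(ψ, s) = max_{1≤i≤n} ψ(s)_i · ( |s_i|(1 − 2ψ(s)_i) + ψ(s)ᵀ|s| ) / ‖ψ(s)‖_∞ and κ_{c,c}(ψ, s) = max_{1≤i≤n} ( |s_i|(1 − 2ψ(s)_i) + ψ(s)ᵀ|s| ), and moreover κ_{c,c}(ψ, s) ≤ 2‖s‖_∞. -/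
open scoped BigOperators ENNReal

noncomputable section

namespace TR

lemma sm_den_pos {n : ℕ} (s : Fin n → ℝ) (i : Fin n) : 0 < ∑ j, Real.exp (s j) :=
  Finset.sum_pos (fun j _ => Real.exp_pos _) ⟨i, Finset.mem_univ i⟩

lemma sm_pos {n : ℕ} (s : Fin n → ℝ) (i : Fin n) : 0 < softmax s i :=
  div_pos (Real.exp_pos _) (sm_den_pos s i)

lemma sm_sum {n : ℕ} (s : Fin n → ℝ) (i : Fin n) : ∑ j, softmax s j = 1 := by
  unfold softmax
  rw [← Finset.sum_div]
  exact div_self (sm_den_pos s i).ne'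

lemma sm_add_le {n : ℕ} (s : Fin n → ℝ) (i j : Fin n) (h : i ≠ j) :
    softmax s i + softmax s j ≤ 1 := by
  rw [← sm_sum s i, ← Finset.sum_pair h]
  exact Finset.sum_le_sum_of_subset_of_nonneg (Finset.subset_univ _)
    (fun k _ _ => (sm_pos s k).le)

lemma sm_le {n : ℕ} (s : Fin n → ℝ) (i : Fin n) : softmax s i ≤ 1 := by
  rw [← sm_sum s i]
  exact Finset.single_le_sum (fun k _ => (sm_pos s k).le) (Finset.mem_univ i)

lemma sm_abs {n : ℕ} (s : Fin n → ℝ) (i j : Fin n) :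
    |(if i = j then (1 : ℝ) else 0) - softmax s j|
      = softmax s j + (if i = j then 1 - 2 * softmax s j else 0) := by
  have h1 := sm_pos s j
  have h2 := sm_le s j
  split_ifs
  · rw [abs_of_nonneg (by linarith)]; ring
  · rw [abs_of_nonpos (by linarith)]; ring

lemma sm_row {n : ℕ} (s w : Fin n → ℝ) (i : Fin n) :
    ∑ j, |(if i = j then (1 : ℝ) else 0) - softmax s j| * w j
      = w i * (1 - 2 * softmax s i) + ∑ j, softmax s j * w j := by
  simp only [sm_abs, add_mul, Finset.sum_add_distrib, ite_mul, zero_mul]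
  simp
  ring

lemma sm_mulVec {n : ℕ} (s x : Fin n → ℝ) (i : Fin n) :
    ∑ j, softmax s i * ((if i = j then (1 : ℝ) else 0) - softmax s j) * x j
      = softmax s i * (x i - ∑ j, softmax s j * x j) := by
  simp only [mul_assoc, ← Finset.mul_sum, sub_mul, Finset.sum_sub_distrib, ite_mul, zero_mul]
  simp

lemma sm_var {n : ℕ} (s x : Fin n → ℝ) (i0 : Fin n) :
    ∑ i, softmax s i * (x i - ∑ j, softmax s j * x j) ^ 2
      = ∑ i, softmax s i * x i ^ 2 - (∑ j, softmax s j * x j) ^ 2 := by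
  set m := ∑ j, softmax s j * x j with hm
  have : ∀ i, softmax s i * (x i - m) ^ 2
      = softmax s i * x i ^ 2 - 2 * m * (softmax s i * x i) + softmax s i * m ^ 2 := by
    intro i; ring
  simp only [this, Finset.sum_add_distrib, Finset.sum_sub_distrib, ← Finset.mul_sum,
    ← Finset.sum_mul, sm_sum s i0]
  rw [← hm]; ring

lemma sm_quad {n : ℕ} (s x : Fin n → ℝ) (i0 : Fin n) :
    ∑ i, x i * (softmax s i * (x i - ∑ j, softmax s j * x j))
      = ∑ i, softmax s i * (x i - ∑ j, softmax s j * x j) ^ 2 := by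
  rw [sm_var s x i0]
  set m := ∑ j, softmax s j * x j with hm
  have : ∀ i, x i * (softmax s i * (x i - m))
      = softmax s i * x i ^ 2 - m * (softmax s i * x i) := by
    intro i; ring
  simp only [this, Finset.sum_sub_distrib, ← Finset.mul_sum]
  rw [← hm]; ring

lemma sm_le_linf {n : ℕ} (x : Fin n → ℝ) (i : Fin n) : |x i| ≤ linf x :=
  le_ciSup (f := fun i => |x i|) (Set.finite_range _).bddAbove i

lemma sm_l2 {n : ℕ} (s x : Fin n → ℝ) (i0 : Fin n) :
    ∑ i, (softmax s i * (x i - ∑ j, softmax s j * x j)) ^ 2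
      ≤ linf (softmax s) ^ 2 * ∑ i, x i ^ 2 := by
  set M := linf (softmax s)
  have hM : ∀ i, softmax s i ≤ M := fun i => (le_abs_self _).trans (sm_le_linf _ i)
  have hM0 : 0 ≤ M := (sm_pos s i0).le.trans (hM i0)
  calc _ ≤ ∑ i, M * (softmax s i * (x i - ∑ j, softmax s j * x j) ^ 2) := by
        apply Finset.sum_le_sum
        intro i _
        rw [mul_pow, pow_two (softmax s i), mul_assoc]
        exact mul_le_mul_of_nonneg_right (hM i) (mul_nonneg (sm_pos s i).le (sq_nonneg _))
    _ = M * (∑ i, softmax s i * x i ^ 2 - (∑ j, softmax s j * x j) ^ 2) := by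
        rw [← Finset.mul_sum, sm_var s x i0]
    _ ≤ M * ∑ i, M * x i ^ 2 := by
        apply mul_le_mul_of_nonneg_left _ hM0
        have : ∑ i, softmax s i * x i ^ 2 ≤ ∑ i, M * x i ^ 2 :=
          Finset.sum_le_sum fun i _ => mul_le_mul_of_nonneg_right (hM i) (sq_nonneg _)
        nlinarith [sq_nonneg (∑ j, softmax s j * x j)]
    _ = _ := by rw [← Finset.mul_sum]; ring

lemma sm_deriv {n : ℕ} (s : Fin n → ℝ) (J : Matrix (Fin n) (Fin n) ℝ)
    (hJ : J = Matrix.of fun i j =>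
      softmax s i * ((if i = j then 1 else 0) - softmax s j)) :
    HasFDerivAt softmax (LinearMap.toContinuousLinearMap (Matrix.mulVecLin J)) s := by
  rw [hasFDerivAt_pi']
  intro i
  have hd := sm_den_pos s i
  have he : ∀ j, HasFDerivAt (fun x : Fin n → ℝ => Real.exp (x j))
      (Real.exp (s j) • ContinuousLinearMap.proj (R := ℝ) (φ := fun _ : Fin n => ℝ) j) s :=
    fun j => (hasFDerivAt_apply j s).exp
  have hs := HasFDerivAt.fun_sum (u := Finset.univ) (fun j _ => he j)
  have hq := (he i).mul ((hasDerivAt_inv hd.ne').comp_hasFDerivAt s hs)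
  refine hq.congr_fderiv ?_
  ext x
  simp only [hJ, ContinuousLinearMap.comp_apply, ContinuousLinearMap.proj_apply,
    LinearMap.coe_toContinuousLinearMap', Matrix.mulVecLin_apply, Matrix.mulVec, dotProduct,
    Matrix.of_apply, sm_mulVec]
  simp [softmax, div_mul_eq_mul_div, ← Finset.sum_div]
  field_simp
  ring

/-- Jacobian, norms and condition numbers of the softmax. -/
theorem softmax_conditioning {n : ℕ} (s : Fin n → ℝ)
    (J : Matrix (Fin n) (Fin n) ℝ)
    (hJ : J = Matrix.of fun i j =>
      softmax s i * ((if i = j then 1 else 0) - softmax s j)) :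
    (HasFDerivAt softmax (LinearMap.toContinuousLinearMap (Matrix.mulVecLin J)) s
      ∧ J.IsSymm ∧ J.PosSemidef
      ∧ J.mulVec (fun _ => 1) = 0
      ∧ (∀ y : Fin n → ℝ, J.mulVec y = 0 → ∃ c : ℝ, y = fun _ => c))
    ∧ (sigmaMax J ≤ linf (softmax s)
      ∧ norm1inf J = (⨆ i, softmax s i * (1 - softmax s i))
      ∧ norm11 J = norminfinf J
      ∧ norminfinf J = 2 * ⨆ i, softmax s i * (1 - softmax s i))
    ∧ (s ≠ 0 →
        (norminfinf (J * Matrix.diagonal s) / linf (softmax s)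
            = (⨆ i, softmax s i *
                (|s i| * (1 - 2 * softmax s i) + ∑ j, softmax s j * |s j|)) /
              linf (softmax s))
          ∧ norminfinf (Matrix.diagonal (fun i => (softmax s i)⁻¹) * J * Matrix.diagonal s)
              = (⨆ i, |s i| * (1 - 2 * softmax s i) + ∑ j, softmax s j * |s j|)
          ∧ (⨆ i, |s i| * (1 - 2 * softmax s i) + ∑ j, softmax s j * |s j|)
              ≤ 2 * linf s) := by
  have hJi : ∀ i j, J i j = softmax s i * ((if i = j then 1 else 0) - softmax s j) := by
    intro i j; rw [hJ]; rfl
  have hsymm : ∀ i j, J i j = J j i := by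
    intro i j
    rw [hJi, hJi]
    by_cases h : i = j
    · subst h; rfl
    · rw [if_neg h, if_neg (Ne.symm h)]; ring
  have hmv : ∀ x i, J.mulVec x i = softmax s i * (x i - ∑ j, softmax s j * x j) := by
    intro x i
    simp only [Matrix.mulVec, dotProduct, hJi, sm_mulVec]
  have hrow : ∀ i, ∑ j, |J i j| = 2 * (softmax s i * (1 - softmax s i)) := by
    intro i
    have := sm_row s (fun _ => 1) i
    simp only [mul_one, sm_sum s i] at this
    simp only [hJi, abs_mul, ← Finset.mul_sum, this, abs_of_pos (sm_pos s i)]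
    ring
  have hrow2 : ∀ i, ∑ j, |(if i = j then (1 : ℝ) else 0) - softmax s j| * |s j|
      = |s i| * (1 - 2 * softmax s i) + ∑ j, softmax s j * |s j| :=
    fun i => sm_row s (fun j => |s j|) i
  refine ⟨⟨sm_deriv s J hJ, ?_, ?_, ?_, ?_⟩, ⟨?_, ?_, ?_, ?_⟩, ?_⟩
  · ext i j; exact hsymm j i
  · refine Matrix.PosSemidef.of_dotProduct_mulVec_nonneg ?_ ?_
    · ext i j; simpa using hsymm j i
    · intro x
      simp only [dotProduct, hmv, star_trivial]
      rcases isEmpty_or_nonempty (Fin n) with h | ⟨⟨i0⟩⟩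
      · simp
      · rw [sm_quad s x i0]
        exact Finset.sum_nonneg fun i _ => mul_nonneg (sm_pos s i).le (sq_nonneg _)
  · ext i
    rw [hmv]
    simp [sm_sum s i]
  · intro y hy
    refine ⟨∑ j, softmax s j * y j, ?_⟩
    ext i
    have h := congrFun hy i
    rw [hmv] at h
    have := (mul_eq_zero.mp h).resolve_left (sm_pos s i).ne'
    linarith
  · have h0 : 0 ≤ linf (softmax s) := Real.iSup_nonneg fun i => abs_nonneg _
    refine Real.iSup_le ?_ h0
    rintro ⟨x, hx⟩
    have hx2 : ∑ i, x i ^ 2 = 1 := by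
      unfold l2 at hx
      exact Real.sqrt_eq_one.mp hx
    rcases isEmpty_or_nonempty (Fin n) with h | ⟨⟨i0⟩⟩
    · simp at hx2
    · have := sm_l2 s x i0
      rw [hx2, mul_one] at this
      unfold l2
      refine Real.sqrt_le_iff.mpr ⟨h0, ?_⟩
      simpa only [hJi, sm_mulVec] using this
  · rcases isEmpty_or_nonempty (Fin n) with h | h
    · simp [norm1inf]
    · have hb : BddAbove (Set.range fun i => softmax s i * (1 - softmax s i)) :=
        (Set.finite_range _).bddAbove
      apply le_antisymm
      · refine ciSup_le ?_
        rintro ⟨i, j⟩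
        refine le_trans ?_ (le_ciSup hb i)
        simp only [hJi, abs_mul, abs_of_pos (sm_pos s i), sm_abs]
        refine mul_le_mul_of_nonneg_left ?_ (sm_pos s i).le
        by_cases hij : i = j
        · subst hij; simp only [if_true]; linarith
        · rw [if_neg hij]
          linarith [sm_add_le s i j hij]
      · refine ciSup_le fun i => ?_
        have hle : |J i i| ≤ norm1inf J :=
          le_ciSup (f := fun p : Fin n × Fin n => |J p.1 p.2|)
            (Set.finite_range _).bddAbove (i, i)
        refine le_trans ?_ hle
        rw [hJi, if_pos rfl]
        exact le_abs_self _
  · unfold norm11 norminfinf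
    congr 1; ext j
    exact Finset.sum_congr rfl fun i _ => by rw [hsymm]
  · unfold norminfinf
    simp only [hrow]
    rw [Real.mul_iSup_of_nonneg (by norm_num)]
  · intro _
    refine ⟨?_, ?_, ?_⟩
    · congr 1
      unfold norminfinf
      congr 1; ext i
      rw [← hrow2, Finset.mul_sum]
      refine Finset.sum_congr rfl fun j _ => ?_
      rw [Matrix.mul_diagonal, hJi, abs_mul, abs_mul, abs_of_pos (sm_pos s i), mul_assoc]
    · unfold norminfinf
      congr 1; ext i
      rw [← hrow2]
      refine Finset.sum_congr rfl fun j _ => ?_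
      rw [Matrix.mul_diagonal, Matrix.diagonal_mul, hJi,
        inv_mul_cancel_left₀ (sm_pos s i).ne', abs_mul]
    · have h0 : 0 ≤ linf s := Real.iSup_nonneg fun i => abs_nonneg _
      refine Real.iSup_le (fun i => ?_) (by positivity)
      rw [← hrow2]
      calc _ ≤ ∑ j, |(if i = j then (1 : ℝ) else 0) - softmax s j| * linf s :=
            Finset.sum_le_sum fun j _ =>
              mul_le_mul_of_nonneg_left (sm_le_linf s j) (abs_nonneg _)
        _ = (2 - 2 * softmax s i) * linf s := by
            rw [sm_row s (fun _ => linf s) i, ← Finset.sum_mul, sm_sum s i]; ring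
        _ ≤ _ := mul_le_mul_of_nonneg_right (by linarith [sm_pos s i]) h0

end TR
end
end
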